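/- If p, q ∈ R satisfy p ≠ 0 and 𝒟(p) = q·p, then there exist a ∈ ℕ and a nonzero ℓ ∈ F such that p = C(ℓ)·det[X]^a and q = C(d(ℓ)/ℓ) + a·Σ_{s,t} C(trace(M_{st}))·Y_{st}. (For the standard basis M_{st} = E(s,t) of elementary matrices, the last sum is Σ_{i=1}^n Y_{ii}, recovering the classification of Darboux polynomials for the standard generic derivation.) -/

import Mathlib

open MvPolynomial

/-- The polynomial ring `R = F{Y_ij}[X_ij]`: multivariate polynomials over `F` in the
variables `Y i j k` (indexed by `Sum.inl (i,j,k)`) and `X i j` (indexed by `Sum.inr (i,j)`). -/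
abbrev Rgen (F : Type*) [Field F] (n : ℕ) : Type _ :=
  MvPolynomial ((Fin n × Fin n × ℕ) ⊕ (Fin n × Fin n)) F

/-- `det[X]`: the determinant of the `n × n` matrix whose `(i,j)` entry is the variable `X i j`. -/
noncomputable def detX (F : Type*) [Field F] (n : ℕ) : Rgen F n :=
  (Matrix.of fun i j : Fin n => X (Sum.inr (i, j))).det

/-- The `F`-subalgebra `F{Y}` of `R` generated by all the variables `Y i j k`. -/
noncomputable def FY (F : Type*) [Field F] (n : ℕ) : Subalgebra F (Rgen F n) :=
  Algebra.adjoin F (Set.range fun v : Fin n × Fin n × ℕ => X (Sum.inl v))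

/-- The `F`-subalgebra `F[X]` of `R` generated by all the variables `X i j`. -/
noncomputable def FX (F : Type*) [Field F] (n : ℕ) : Subalgebra F (Rgen F n) :=
  Algebra.adjoin F (Set.range fun v : Fin n × Fin n => X (Sum.inr v))

namespace MvPolynomial

theorem totalDegree_pderiv_lt {σ R : Type*} [CommSemiring R] {i : σ} {p : MvPolynomial σ R}
    (h : pderiv i p ≠ 0) : (pderiv i p).totalDegree < p.totalDegree := by
  obtain ⟨m, hm, hdeg⟩ := Finset.exists_mem_eq_sup _ (support_nonempty.2 h)
    fun m : σ →₀ ℕ => m.sum fun _ e => e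
  rw [totalDegree, hdeg]
  change m.degree < _
  have hmem : m + Finsupp.single i 1 ∈ p.support := by
    rw [mem_support_iff, coeff_pderiv] at hm
    exact mem_support_iff.2 (left_ne_zero_of_mul hm)
  have hle : (m + Finsupp.single i 1).degree ≤ p.totalDegree := le_totalDegree hmem
  rw [map_add, Finsupp.degree_single] at hle
  omega

theorem pderiv_eq_zero_of_eq_mul {σ R : Type*} [CommRing R] [IsDomain R] {i : σ}
    {p s : MvPolynomial σ R} (h : pderiv i p = s * p) : pderiv i p = 0 := by
  by_contra h0
  have hlt := totalDegree_pderiv_lt h0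
  rw [h] at h0 hlt
  rw [totalDegree_mul_of_isDomain (left_ne_zero_of_mul h0) (right_ne_zero_of_mul h0)] at hlt
  omega

theorem notMem_vars_of_pderiv_eq_zero {σ R : Type*} [CommRing R] [IsDomain R] [CharZero R] {i : σ}
    {p : MvPolynomial σ R} (h : pderiv i p = 0) : i ∉ p.vars := by
  intro hi
  obtain ⟨m, hm, him⟩ := (mem_vars_iff_mem_support i).1 hi
  have hmi : m i ≠ 0 := Finsupp.mem_support_iff.1 him
  have hc := coeff_pderiv (i := i) p (m - Finsupp.single i 1)
  rw [h, coeff_zero, Finsupp.sub_add_single_one_cancel hmi, eq_comm, mul_eq_zero] at hc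
  rcases hc with hc | hc
  · exact mem_support_iff.1 hm hc
  · exact Nat.cast_add_one_ne_zero _ hc

theorem totalDegree_mkDerivation_le {σ R : Type*} [CommSemiring R] (f : σ → MvPolynomial σ R)
    (hf : ∀ v, (f v).totalDegree ≤ 1) (p : MvPolynomial σ R) :
    (mkDerivation R f p).totalDegree ≤ p.totalDegree := by
  rw [p.as_sum, map_sum, ← p.as_sum]
  refine totalDegree_finsetSum_le fun m hm => ?_
  rw [mkDerivation_monomial]
  refine (totalDegree_smul_le _ _).trans (totalDegree_finsetSum_le fun v hv => ?_)
  have hmv : m v ≠ 0 := Finsupp.mem_support_iff.1 hv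
  have hm' : m.degree ≤ p.totalDegree := le_totalDegree hm
  rw [← Finsupp.sub_add_single_one_cancel hmv] at hm'
  simp only [map_add, Finsupp.degree_single] at hm'
  have h1 : (monomial (m - Finsupp.single v 1) ((m v : ℕ) : R)).totalDegree ≤
      (m - Finsupp.single v 1).degree := totalDegree_monomial_le _ _
  have := totalDegree_mul (monomial (m - Finsupp.single v 1) ((m v : ℕ) : R)) (f v)
  have := hf v
  change (monomial (m - Finsupp.single v 1) ((m v : ℕ) : R) * f v).totalDegree ≤ _
  omega

theorem exists_eq_C_mul_of_totalDegree_le {σ R : Type*} [CommRing R] [IsDomain R]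
    {p r s : MvPolynomial σ R} (hp : p ≠ 0) (hdeg : r.totalDegree ≤ p.totalDegree)
    (h : r = s * p) : ∃ c : R, r = C c * p := by
  rcases eq_or_ne s 0 with rfl | hs
  · exact ⟨0, by simpa using h⟩
  · rw [h, totalDegree_mul_of_isDomain hs hp] at hdeg
    exact ⟨s.coeff 0, by rw [h, ← totalDegree_eq_zero_iff_eq_C.1 (by omega)]⟩

end MvPolynomial

theorem Derivation.sum_apply {R A M ι : Type*} [CommSemiring R] [CommSemiring A]
    [AddCommMonoid M] [Algebra R A] [Module A M] [Module R M] (s : Finset ι)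
    (δ : ι → Derivation R A M) (a : A) : (∑ k ∈ s, δ k) a = ∑ k ∈ s, δ k a := by
  rw [← Derivation.coeFnAddMonoidHom_apply, map_sum, Finset.sum_apply]
  rfl

section RowAction

variable {F τ m : Type*} [Field F] [Fintype m]

/-- The `F`-linear derivation of `F[τ][X i j]` that kills the variables indexed by `τ` and acts on
the matrix of variables `X` as left multiplication by `B`. -/
noncomputable def leftMulDerivation (B : Matrix m m F) :
    Derivation F (MvPolynomial (τ ⊕ (m × m)) F) (MvPolynomial (τ ⊕ (m × m)) F) :=
  mkDerivation F (Sum.elim 0 fun ij => ∑ l, C (B ij.1 l) * X (Sum.inr (l, ij.2)))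

@[simp]
theorem leftMulDerivation_X_inl (B : Matrix m m F) (y : τ) :
    leftMulDerivation B (X (Sum.inl y) : MvPolynomial (τ ⊕ (m × m)) F) = 0 := by
  simp [leftMulDerivation]

@[simp]
theorem leftMulDerivation_X_inr (B : Matrix m m F) (i j : m) :
    leftMulDerivation B (X (Sum.inr (i, j)) : MvPolynomial (τ ⊕ (m × m)) F) =
      ∑ l, C (B i l) * X (Sum.inr (l, j)) := by
  simp [leftMulDerivation]

theorem leftMulDerivation_sum_smul {ι : Type*} (s : Finset ι) (c : ι → F) (B : ι → Matrix m m F)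
    (p : MvPolynomial (τ ⊕ (m × m)) F) :
    leftMulDerivation (∑ k ∈ s, c k • B k) p = ∑ k ∈ s, C (c k) * leftMulDerivation (B k) p := by
  have h : leftMulDerivation (τ := τ) (∑ k ∈ s, c k • B k) =
      ∑ k ∈ s, c k • leftMulDerivation (B k) := by
    refine derivation_ext ?_
    rintro (y | ⟨i, j⟩)
    · simp [Derivation.sum_apply]
    · simp only [leftMulDerivation_X_inr, Matrix.sum_apply, Matrix.smul_apply, map_sum,
        Finset.sum_mul, Derivation.sum_apply, Derivation.smul_apply, smul_eq_mul,
        Finset.smul_sum, C_mul, smul_eq_C_mul, mul_assoc]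
      exact Finset.sum_comm
  rw [h]
  simp [Derivation.sum_apply, smul_eq_C_mul]

theorem leftMulDerivation_bracket (A B : Matrix m m F) (p : MvPolynomial (τ ⊕ (m × m)) F) :
    leftMulDerivation A (leftMulDerivation B p) - leftMulDerivation B (leftMulDerivation A p) =
      leftMulDerivation (B * A - A * B) p := by
  rw [← Derivation.commutator_apply]
  congr 1
  refine derivation_ext ?_
  rintro (y | ⟨i, j⟩)
  · simp [Derivation.commutator_apply]
  · have key (A B : Matrix m m F) : ∑ l, C (A i l) * ∑ k, C (B l k) * X (Sum.inr (k, j)) =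
        ∑ k, C ((A * B) i k) * (X (Sum.inr (k, j)) : MvPolynomial (τ ⊕ (m × m)) F) := by
      simp only [Matrix.mul_apply, map_sum, C_mul, Finset.sum_mul, Finset.mul_sum, mul_assoc]
      exact Finset.sum_comm
    simp [Derivation.commutator_apply, key, sub_mul]

variable [DecidableEq m]

theorem exists_leftMulDerivation_eq_trace {p : MvPolynomial (τ ⊕ (m × m)) F} (hp : p ≠ 0)
    (h : ∀ B : Matrix m m F, ∃ s, leftMulDerivation B p = s * p) :
    ∃ c : F, ∀ B : Matrix m m F, leftMulDerivation B p = C (c * B.trace) * p := by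
  have hconst (B : Matrix m m F) : ∃ c : F, leftMulDerivation B p = C c * p := by
    obtain ⟨s, hs⟩ := h B
    refine exists_eq_C_mul_of_totalDegree_le hp (totalDegree_mkDerivation_le _ ?_ p) hs
    rintro (y | ⟨i, j⟩)
    · simp
    · refine totalDegree_finsetSum_le fun l _ => (totalDegree_mul _ _).trans ?_
      simp
  choose r hr using hconst
  have hbr (A B : Matrix m m F) : r (B * A - A * B) = 0 := by
    have := leftMulDerivation_bracket A B p
    rw [hr B, hr A, ← smul_eq_C_mul, ← smul_eq_C_mul, Derivation.map_smul, Derivation.map_smul,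
      hr B, hr A, hr, smul_eq_C_mul, smul_eq_C_mul, mul_left_comm, sub_self, eq_comm,
      mul_eq_zero, or_iff_left hp] at this
    simpa using this
  have hoff {i j : m} (hij : i ≠ j) : r (Matrix.single i j 1) = 0 := by
    simpa [hij.symm, hij] using hbr (Matrix.single i j 1) (Matrix.single i i 1)
  have hB (B : Matrix m m F) : r B = ∑ i, B i i * r (Matrix.single i i 1) := by
    have h1 := leftMulDerivation_sum_smul Finset.univ (fun ij : m × m => B ij.1 ij.2)
      (fun ij => Matrix.single ij.1 ij.2 1) p
    have h2 : ∑ ij : m × m, B ij.1 ij.2 • Matrix.single ij.1 ij.2 (1 : F) = B := by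
      conv_rhs => rw [Matrix.matrix_eq_sum_single B]
      simp [Fintype.sum_prod_type]
    simp only [h2, hr, ← mul_assoc, ← Finset.sum_mul, ← C_mul, ← map_sum] at h1
    rw [C_injective _ _ (mul_right_cancel₀ hp h1), Fintype.sum_prod_type]
    refine Finset.sum_congr rfl fun i _ => Finset.sum_eq_single i (fun j _ hj => ?_) (by simp)
    simp [hoff hj.symm]
  have hdiag (i j : m) : r (Matrix.single i i 1) = r (Matrix.single j j 1) := by
    have h1 := hbr (Matrix.single j i 1) (Matrix.single i j 1)
    rw [hB] at h1
    simpa [Matrix.single_apply, sub_mul, sub_eq_zero] using h1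
  rcases isEmpty_or_nonempty m with hm | ⟨⟨i₀⟩⟩
  · exact ⟨0, fun B => by rw [hr, hB]; simp⟩
  · refine ⟨r (Matrix.single i₀ i₀ 1), fun B => ?_⟩
    rw [hr, hB, Matrix.trace, Finset.mul_sum]
    simp only [hdiag _ i₀, Matrix.diag_apply, mul_comm]

end RowAction

theorem Matrix.diagonal_update_one_one {K m : Type*} [DecidableEq m] [Zero K] [One K] (i : m) :
    Matrix.diagonal (Function.update 1 i 1) = (1 : Matrix m m K) := by
  rw [show Function.update (1 : m → K) i 1 = 1 from
    Function.update_eq_self i (1 : m → K), Matrix.diagonal_one']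

theorem Polynomial.natCast_mul_coeff_of_X_mul_derivative {K : Type*} [Field K]
    {f : Polynomial K} {c : K}
    (h : Polynomial.X * Polynomial.derivative f = Polynomial.C c * f) (k : ℕ) :
    (k : K) * f.coeff k = c * f.coeff k := by
  rw [← Polynomial.coeff_C_mul (a := c), ← h]
  cases k with
  | zero => simp
  | succ k => simp [Polynomial.coeff_X_mul, Polynomial.coeff_derivative, mul_comm]

theorem Polynomial.eq_natDegree_of_X_mul_derivative {K : Type*} [Field K] {f : Polynomial K} {c : K}
    (h : Polynomial.X * Polynomial.derivative f = Polynomial.C c * f) (hf : f ≠ 0) :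
    c = f.natDegree :=
  (mul_right_cancel₀ (Polynomial.leadingCoeff_ne_zero.2 hf)
    (natCast_mul_coeff_of_X_mul_derivative h f.natDegree)).symm

theorem Polynomial.eval_of_X_mul_derivative {K : Type*} [Field K] [CharZero K]
    {f : Polynomial K} {a : ℕ}
    (h : Polynomial.X * Polynomial.derivative f = Polynomial.C (a : K) * f) (t : K) :
    f.eval t = t ^ a * f.eval 1 := by
  obtain ⟨b, rfl⟩ : ∃ b, f = Polynomial.C b * Polynomial.X ^ a := by
    refine ⟨f.coeff a, ?_⟩
    ext k
    rw [Polynomial.coeff_C_mul_X_pow]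
    split_ifs with hk
    · rw [hk]
    · by_contra h0
      exact hk (by exact_mod_cast
        mul_right_cancel₀ h0 (natCast_mul_coeff_of_X_mul_derivative h k))
  simp [mul_comm b]

section Evaluation

variable {F K τ m : Type*} [Field F] [Field K] [Algebra F K]

theorem mul_derivative_algHom_apply {σ : Type*} (φ : MvPolynomial σ F →ₐ[F] Polynomial K)
    (δ : Derivation F (MvPolynomial σ F) (MvPolynomial σ F)) (u : Polynomial K)
    (h : ∀ v, u * Polynomial.derivative (φ (X v)) = φ (δ (X v))) (p : MvPolynomial σ F) :
    u * Polynomial.derivative (φ p) = φ (δ p) := by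
  induction p using MvPolynomial.induction_on with
  | C a =>
    have : φ (C a) = Polynomial.C (algebraMap F K a) := φ.commutes a
    simp [this]
  | add p q hp hq => simp [mul_add, hp, hq]
  | mul_X p v hp =>
    simp only [map_mul, Polynomial.derivative_mul, Derivation.leibniz, smul_eq_mul, map_add,
      ← hp, ← h]
    ring

/-- Evaluation of `F[τ][X i j]` at `τ = 0` and `X = A`. -/
noncomputable def evalMatrix (A : Matrix m m K) : MvPolynomial (τ ⊕ (m × m)) F →ₐ[F] K :=
  aeval (Sum.elim 0 fun ij => A ij.1 ij.2)

variable [Fintype m] [DecidableEq m]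

theorem evalMatrix_transvection_mul [CharZero K] {p s : MvPolynomial (τ ⊕ (m × m)) F} {i j : m}
    (hij : i ≠ j) (hp : leftMulDerivation (Matrix.single i j 1) p = s * p) (c : K)
    (A : Matrix m m K) :
    evalMatrix (Matrix.transvection i j c * A) p = evalMatrix A p := by
  let φ : MvPolynomial (τ ⊕ (m × m)) F →ₐ[F] Polynomial K :=
    aeval (Sum.elim 0 fun kl => Polynomial.C (A kl.1 kl.2) +
      if kl.1 = i then Polynomial.X * Polynomial.C (A j kl.2) else 0)
  have hφ : Polynomial.derivative (φ p) = φ s * φ p := by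
    rw [← map_mul, ← hp, ← one_mul (Polynomial.derivative (φ p))]
    refine mul_derivative_algHom_apply φ _ _ ?_ p
    rintro (y | ⟨k, l⟩)
    · simp [φ]
    · by_cases hk : k = i
      · simp [φ, hk, Matrix.single_apply, hij.symm]
      · simp [φ, hk, Ne.symm hk]
  have hconst : Polynomial.derivative (φ p) = 0 := by
    by_contra h0
    have hlt := Polynomial.degree_derivative_lt (p := φ p) (by rintro h; simp [h] at h0)
    rw [hφ] at h0 hlt
    rw [mul_comm] at hlt
    exact hlt.not_ge (Polynomial.degree_le_mul_left _ (left_ne_zero_of_mul h0))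
  have heval (t : K) : (φ p).eval t = evalMatrix (Matrix.transvection i j t * A) p := by
    have : ((Polynomial.aeval t).restrictScalars F).comp φ =
        evalMatrix (τ := τ) (Matrix.transvection i j t * A) := by
      refine algHom_ext ?_
      rintro (y | ⟨k, l⟩)
      · simp [φ, evalMatrix]
      · by_cases hk : k = i
        · simp [φ, evalMatrix, hk, Matrix.transvection, add_mul, mul_comm t]
        · simp [φ, evalMatrix, hk, Matrix.transvection, add_mul]
    exact DFunLike.congr_fun this p
  rw [← heval, Polynomial.eq_C_of_derivative_eq_zero hconst, Polynomial.eval_C]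
  have h0 := heval 0
  rw [Polynomial.eq_C_of_derivative_eq_zero hconst, Polynomial.eval_C] at h0
  simpa using h0

theorem exists_polynomial_eval_eq_evalMatrix_scale_row {p : MvPolynomial (τ ⊕ (m × m)) F} {i : m}
    {c : F} (hp : leftMulDerivation (Matrix.single i i 1) p = C c * p) (A : Matrix m m K) :
    ∃ f : Polynomial K,
      Polynomial.X * Polynomial.derivative f = Polynomial.C (algebraMap F K c) * f ∧
      ∀ t, f.eval t = evalMatrix (Matrix.diagonal (Function.update 1 i t) * A) p := by
  let φ : MvPolynomial (τ ⊕ (m × m)) F →ₐ[F] Polynomial K :=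
    aeval (Sum.elim 0 fun kl => (if kl.1 = i then Polynomial.X else 1) *
      Polynomial.C (A kl.1 kl.2))
  have hφ : Polynomial.X * Polynomial.derivative (φ p) = Polynomial.C (algebraMap F K c) * φ p := by
    have hc : φ (C c) = Polynomial.C (algebraMap F K c) := φ.commutes c
    rw [← hc, ← map_mul, ← hp]
    refine mul_derivative_algHom_apply φ _ _ ?_ p
    rintro (y | ⟨k, l⟩)
    · simp [φ]
    · by_cases hk : k = i
      · simp [φ, hk, Matrix.single_apply]
      · simp [φ, hk, Ne.symm hk]
  have heval (t : K) :
      (φ p).eval t = evalMatrix (Matrix.diagonal (Function.update 1 i t) * A) p := by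
    have : ((Polynomial.aeval t).restrictScalars F).comp φ =
        evalMatrix (τ := τ) (Matrix.diagonal (Function.update 1 i t) * A) := by
      refine algHom_ext ?_
      rintro (y | ⟨k, l⟩)
      · simp [φ, evalMatrix]
      · by_cases hk : k = i
        · simp [φ, evalMatrix, hk, Matrix.diagonal_mul, mul_comm t]
        · simp [φ, evalMatrix, hk, Matrix.diagonal_mul]
    exact DFunLike.congr_fun this p
  exact ⟨φ p, hφ, heval⟩

theorem evalMatrix_scale_row [CharZero K] {p : MvPolynomial (τ ⊕ (m × m)) F} {i : m} {a : ℕ}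
    (hp : leftMulDerivation (Matrix.single i i 1) p = C (a : F) * p) (t : K) (A : Matrix m m K) :
    evalMatrix (Matrix.diagonal (Function.update 1 i t) * A) p = t ^ a * evalMatrix A p := by
  obtain ⟨f, hf, heval⟩ := exists_polynomial_eval_eq_evalMatrix_scale_row hp A
  rw [map_natCast] at hf
  rw [← heval, Polynomial.eval_of_X_mul_derivative hf, heval,
    Matrix.diagonal_update_one_one, one_mul]

theorem evalMatrix_diagonal_mul [CharZero K] {p : MvPolynomial (τ ⊕ (m × m)) F} {a : ℕ}
    (hp : ∀ i, leftMulDerivation (Matrix.single i i 1) p = C (a : F) * p) (w : m → K)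
    (A : Matrix m m K) :
    evalMatrix (Matrix.diagonal w * A) p = (∏ i, w i) ^ a * evalMatrix A p := by
  have hs (s : Finset m) : evalMatrix (Matrix.diagonal (s.piecewise w 1) * A) p =
      (∏ i ∈ s, w i) ^ a * evalMatrix A p := by
    induction s using Finset.induction_on with
    | empty => simp [Matrix.diagonal_one']
    | insert i s hi ih =>
      have : Matrix.diagonal ((insert i s).piecewise w 1) =
          Matrix.diagonal (Function.update 1 i (w i)) * Matrix.diagonal (s.piecewise w 1) := by
        rw [Matrix.diagonal_mul_diagonal]
        congr 1
        ext k
        by_cases hk : k = i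
        · subst hk; simp [hi]
        · simp [hk, Finset.piecewise]
      rw [this, Matrix.mul_assoc, evalMatrix_scale_row (hp i), ih, Finset.prod_insert hi, mul_pow,
        mul_assoc]
  simpa using hs Finset.univ

theorem evalMatrix_mul [CharZero K] {p : MvPolynomial (τ ⊕ (m × m)) F} {a : ℕ}
    (hp : ∀ B : Matrix m m F, leftMulDerivation B p = C (a * B.trace) * p) (G A : Matrix m m K) :
    evalMatrix (G * A) p = G.det ^ a * evalMatrix A p := by
  induction G using Matrix.diagonal_transvection_induction generalizing A with
  | hdiag w hw =>
    rw [Matrix.det_diagonal]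
    exact evalMatrix_diagonal_mul (fun i => by simpa using hp (Matrix.single i i 1)) w A
  | htransvec t =>
    rw [t.det, one_pow, one_mul]
    exact evalMatrix_transvection_mul t.hij (hp _) t.c A
  | hmul G H hG hH => rw [Matrix.mul_assoc, hG, hH, Matrix.det_mul, mul_pow, mul_assoc]

end Evaluation

theorem exists_eq_C_mul_det_pow {F τ m : Type*} [Field F] [CharZero F] [Fintype m] [DecidableEq m]
    [Nonempty m] {p : MvPolynomial (τ ⊕ (m × m)) F} (hp : p ≠ 0)
    (hτ : ∀ y : τ, pderiv (Sum.inl y) p = 0)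
    (h : ∀ B : Matrix m m F, ∃ s, leftMulDerivation B p = s * p) :
    ∃ (a : ℕ) (l : F), (∀ B : Matrix m m F, leftMulDerivation B p = C (a * B.trace) * p) ∧
      p = C l * (Matrix.of fun i j : m => X (Sum.inr (i, j))).det ^ a := by
  let R := MvPolynomial (τ ⊕ (m × m)) F
  let K := FractionRing R
  have hK : CharZero K := charZero_of_injective_algebraMap (algebraMap F K).injective
  obtain ⟨c, hc⟩ := exists_leftMulDerivation_eq_trace hp h
  obtain ⟨p₀, rfl⟩ : ∃ p₀ : MvPolynomial (m × m) F, rename Sum.inr p₀ = p := by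
    refine exists_rename_eq_of_vars_subset_range p Sum.inr Sum.inr_injective ?_
    rintro (y | ij) hv
    · exact (notMem_vars_of_pderiv_eq_zero (hτ y) hv).elim
    · exact ⟨ij, rfl⟩
  set p : R := rename Sum.inr p₀
  let XR : Matrix m m R := Matrix.of fun i j => X (Sum.inr (i, j))
  let XK : Matrix m m K := XR.map (algebraMap R K)
  have hXK : evalMatrix XK p = algebraMap R K p := by
    have : ((evalMatrix (τ := τ) XK).comp (rename Sum.inr) : MvPolynomial (m × m) F →ₐ[F] K) =
        (IsScalarTower.toAlgHom F R K).comp (rename Sum.inr) := by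
      refine algHom_ext fun ij => ?_
      simp [evalMatrix, XK, XR, R]
    exact DFunLike.congr_fun this p₀
  obtain ⟨a, rfl⟩ : ∃ a : ℕ, c = a := by
    obtain ⟨i⟩ := ‹Nonempty m›
    obtain ⟨f, hf, heval⟩ := exists_polynomial_eval_eq_evalMatrix_scale_row
      (by simpa using hc (Matrix.single i i 1)) XK
    have hf0 : f ≠ 0 := by
      rintro rfl
      have := heval 1
      rw [Matrix.diagonal_update_one_one, one_mul, hXK,
        Polynomial.eval_zero] at this
      exact hp (IsFractionRing.injective R K (by rw [← this, map_zero]))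
    refine ⟨f.natDegree, (algebraMap F K).injective ?_⟩
    rw [map_natCast, Polynomial.eq_natDegree_of_X_mul_derivative hf hf0]
  refine ⟨a, eval (fun ij => (1 : Matrix m m F) ij.1 ij.2) p₀, hc, ?_⟩
  have h1 : evalMatrix (1 : Matrix m m K) p =
      algebraMap F K (eval (fun ij => (1 : Matrix m m F) ij.1 ij.2) p₀) := by
    have : ((evalMatrix (τ := τ) (1 : Matrix m m K)).comp (rename Sum.inr) :
        MvPolynomial (m × m) F →ₐ[F] K) =
        (Algebra.ofId F K).comp (aeval fun ij => (1 : Matrix m m F) ij.1 ij.2) := by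
      refine algHom_ext fun ij => ?_
      simp [evalMatrix, Matrix.one_apply, apply_ite (Algebra.ofId F K)]
    exact DFunLike.congr_fun this p₀
  have hdet := evalMatrix_mul hc XK 1
  rw [mul_one, hXK, h1, mul_comm] at hdet
  apply IsFractionRing.injective R K
  rw [hdet, map_mul, map_pow, RingHom.map_det]
  rfl


/-- The commutator of a partial derivative with a derivation of `F[σ]` that preserves `F`, as an
`F`-linear derivation. -/
noncomputable def pderivCommutator {F σ : Type*} [Field F] {d : F → F}
    {D : MvPolynomial σ F → MvPolynomial σ F} (hD_add : ∀ a b, D (a + b) = D a + D b)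
    (hD_mul : ∀ a b, D (a * b) = D a * b + a * D b) (hD_C : ∀ f : F, D (C f) = C (d f)) (v : σ) :
    Derivation F (MvPolynomial σ F) (MvPolynomial σ F) :=
  Derivation.mk'
    { toFun := fun p => pderiv v (D p) - D (pderiv v p)
      map_add' := fun p q => by
        simp only [map_add, hD_add]
        ring
      map_smul' := fun c p => by
        simp only [smul_eq_C_mul, pderiv_C_mul, hD_mul, hD_C, map_add, RingHom.id_apply]
        ring }
    fun p q => by
      simp only [LinearMap.coe_mk, AddHom.coe_mk, hD_mul, hD_add, pderiv_mul, map_add, smul_eq_mul]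
      ring

theorem pderivCommutator_apply {F σ : Type*} [Field F] {d : F → F}
    {D : MvPolynomial σ F → MvPolynomial σ F} (hD_add : ∀ a b, D (a + b) = D a + D b)
    (hD_mul : ∀ a b, D (a * b) = D a * b + a * D b) (hD_C : ∀ f : F, D (C f) = C (d f)) (v : σ)
    (p : MvPolynomial σ F) :
    pderivCommutator hD_add hD_mul hD_C v p = pderiv v (D p) - D (pderiv v p) :=
  rfl

open scoped Matrix in
theorem Matrix.exists_eq_sum_smul_of_isUnit_det {F m : Type*} [Field F] [Fintype m] [DecidableEq m]
    {M : m × m → Matrix m m F}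
    (hM : IsUnit (Matrix.of fun st il : m × m => M st il.1 il.2).det) (B : Matrix m m F) :
    ∃ c : m × m → F, B = ∑ st, c st • M st := by
  set N := Matrix.of fun st il : m × m => M st il.1 il.2
  refine ⟨(fun il => B il.1 il.2) ᵥ* N⁻¹, ?_⟩
  have h : ((fun il : m × m => B il.1 il.2) ᵥ* N⁻¹) ᵥ* N = fun il => B il.1 il.2 := by
    rw [Matrix.vecMul_vecMul, Matrix.nonsing_inv_mul _ hM, Matrix.vecMul_one]
  ext i l
  rw [Matrix.sum_apply]
  exact (congrFun h (i, l)).symm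

/-- Basis-independence of the classification of Darboux polynomials:
for the generic derivation `𝒟 = ∑_{s,t} Y s t • 𝒟_{M st}` attached to any family of
constant matrices `M st` forming a basis of `Lie(GLₙ)`, the Darboux polynomials in `R`
are exactly `C ℓ * det[X]^a`, with cofactor `C (d ℓ / ℓ) + a • ∑_{s,t} C (tr (M st)) * Y s t`. -/
theorem stmt_14
    {F : Type*} [Field F] [CharZero F] (d : F → F)
    (hd_add : ∀ a b : F, d (a + b) = d a + d b)
    (hd_mul : ∀ a b : F, d (a * b) = d a * b + a * d b)
    (n : ℕ) (hn : 1 ≤ n)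
    (M : Fin n × Fin n → Matrix (Fin n) (Fin n) F)
    (hM_const : ∀ (st : Fin n × Fin n) (i l : Fin n), d (M st i l) = 0)
    (hM_basis : IsUnit
      (Matrix.of fun st il : Fin n × Fin n => M st il.1 il.2).det)
    (D : Rgen F n → Rgen F n)
    (hD_add : ∀ a b, D (a + b) = D a + D b)
    (hD_mul : ∀ a b, D (a * b) = D a * b + a * D b)
    (hD_C : ∀ f : F, D (C f) = C (d f))
    (hD_Y : ∀ (s t : Fin n) (k : ℕ),
      D (X (Sum.inl (s, t, k))) = X (Sum.inl (s, t, k + 1)))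
    (hD_X : ∀ i j : Fin n,
      D (X (Sum.inr (i, j))) =
        ∑ s : Fin n, ∑ t : Fin n, X (Sum.inl (s, t, 0)) *
          (∑ l : Fin n, C (M (s, t) i l) * X (Sum.inr (l, j))))
    (p q : Rgen F n) (hp : p ≠ 0) (hDp : D p = q * p) :
    ∃ (a : ℕ) (l : F), l ≠ 0 ∧ p = C l * detX F n ^ a ∧
      q = C (d l / l) +
        a • ∑ s : Fin n, ∑ t : Fin n,
          C ((M (s, t)).trace) * X (Sum.inl (s, t, (0 : ℕ))) := by
  have hD0 : D 0 = 0 := by simpa using hD_add 0 0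
  have hD1 : D 1 = 0 := by simpa using hD_mul 1 1
  have hcomm_succ (s t : Fin n) (k : ℕ) :
      pderivCommutator hD_add hD_mul hD_C (Sum.inl (s, t, k + 1)) =
        pderiv (Sum.inl (s, t, k)) := by
    refine derivation_ext ?_
    rintro (⟨s', t', k'⟩ | ⟨i, j⟩)
    · rw [pderivCommutator_apply, hD_Y]
      simp only [pderiv_X, Pi.single_apply, Sum.inl.injEq, Prod.mk.injEq, Nat.add_right_cancel_iff]
      split_ifs <;> simp [hD0, hD1]
    · rw [pderivCommutator_apply, hD_X]
      simp [hD0, pderiv_X]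
  have hcomm_zero (s t : Fin n) :
      pderivCommutator hD_add hD_mul hD_C (Sum.inl (s, t, 0)) = leftMulDerivation (M (s, t)) := by
    refine derivation_ext ?_
    rintro (⟨s', t', k'⟩ | ⟨i, j⟩)
    · rw [pderivCommutator_apply, hD_Y, pderiv_X_of_ne (by simp), leftMulDerivation_X_inl]
      simp only [pderiv_X, Pi.single_apply]
      split_ifs <;> simp [hD0, hD1]
    · rw [pderivCommutator_apply, hD_X, leftMulDerivation_X_inr]
      simp [hD0, pderiv_X, Pi.single_apply, ite_and]
  have hbracket {v} (hv : pderiv v p = 0) :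
      pderivCommutator hD_add hD_mul hD_C v p = pderiv v q * p := by
    rw [pderivCommutator_apply, hDp, hv, hD0, pderiv_mul, hv]
    ring
  have hY (y : Fin n × Fin n × ℕ) : pderiv (Sum.inl y) p = 0 := by
    obtain ⟨s, t, k⟩ := y
    obtain ⟨N, hN⟩ : ∃ N, ∀ k, N ≤ k → pderiv (Sum.inl (s, t, k)) p = 0 := by
      have hfin : {k | Sum.inl (s, t, k) ∈ p.vars}.Finite :=
        p.vars.finite_toSet.preimage (f := fun k => Sum.inl (s, t, k))
          (fun _ _ _ _ h => by simpa using h)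
      obtain ⟨N, hN⟩ := hfin.bddAbove
      exact ⟨N + 1, fun k hk => pderiv_eq_zero_of_notMem_vars fun hmem =>
        absurd (hN hmem) (by omega)⟩
    rcases le_total N k with hk | hk
    · exact hN k hk
    · induction hk using Nat.decreasingInduction with
      | self => exact hN N le_rfl
      | of_succ k _ ih =>
        refine pderiv_eq_zero_of_eq_mul (s := pderiv (Sum.inl (s, t, k + 1)) q) ?_
        rw [← hbracket ih, hcomm_succ]
  have hB (B : Matrix (Fin n) (Fin n) F) : ∃ r, leftMulDerivation B p = r * p := by
    obtain ⟨c, rfl⟩ := Matrix.exists_eq_sum_smul_of_isUnit_det hM_basis B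
    refine ⟨∑ st, C (c st) * pderiv (Sum.inl (st.1, st.2, 0)) q, ?_⟩
    rw [leftMulDerivation_sum_smul, Finset.sum_mul]
    refine Finset.sum_congr rfl fun st _ => ?_
    rw [mul_assoc, ← hbracket (hY _), hcomm_zero]
  have : Nonempty (Fin n) := ⟨⟨0, hn⟩⟩
  obtain ⟨a, l, ha, hpl⟩ := exists_eq_C_mul_det_pow hp hY hB
  have hl : l ≠ 0 := by
    rintro rfl
    exact hp (by rw [hpl, C_0, zero_mul])
  refine ⟨a, l, hl, hpl, mul_right_cancel₀ hp ?_⟩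
  let Δ : Derivation F (Rgen F n) (Rgen F n) :=
    ∑ st : Fin n × Fin n,
      (X (Sum.inl (st.1, st.2, 0)) : Rgen F n) • leftMulDerivation (M (st.1, st.2))
  let S : Subring (Rgen F n) :=
    { carrier := {x | D x = Δ x}
      mul_mem' := fun {x y} (hx : D x = Δ x) (hy : D y = Δ y) => by
        simp only [Set.mem_ofPred_eq, hD_mul, hx, hy, Derivation.leibniz, smul_eq_mul]
        ring
      one_mem' := by simp [hD1]
      add_mem' := fun {x y} (hx : D x = Δ x) (hy : D y = Δ y) => by
        simp [hD_add, hx, hy]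
      zero_mem' := by simp [hD0]
      neg_mem' := fun {x} (hx : D x = Δ x) => by
        have := hD_add x (-x)
        rw [add_neg_cancel, hD0, hx] at this
        simpa using (neg_eq_of_add_eq_zero_right this.symm).symm }
  have hXS (i j : Fin n) : X (Sum.inr (i, j)) ∈ S := by
    change D _ = Δ _
    simp [Δ, hD_X, Derivation.sum_apply, Fintype.sum_prod_type]
  have hdetS : detX F n ^ a ∈ S := by
    refine S.pow_mem ?_ a
    rw [detX, Matrix.det_apply]
    exact S.sum_mem fun σ _ => S.zsmul_mem (S.prod_mem fun i _ => hXS _ _) _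
  have hΔp : Δ p = (a • ∑ s : Fin n, ∑ t : Fin n,
      C ((M (s, t)).trace) * X (Sum.inl (s, t, (0 : ℕ)))) * p := by
    simp only [Δ, Derivation.sum_apply, Derivation.smul_apply, ha, Fintype.sum_prod_type,
      smul_eq_mul, Finset.smul_sum, Finset.sum_mul, nsmul_eq_mul, C_mul, map_natCast]
    refine Finset.sum_congr rfl fun s _ => Finset.sum_congr rfl fun t _ => ?_
    ring
  have hDΔ : D p = C (d l / l) * p + Δ p := by
    have hdet : D (detX F n ^ a) = Δ (detX F n ^ a) := hdetS
    change p = C l * detX F n ^ a at hpl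
    rw [hpl, hD_mul, hD_C, hdet, ← mul_assoc, ← C_mul, div_mul_cancel₀ _ hl, ← smul_eq_C_mul _ l,
      ← smul_eq_C_mul _ l, Derivation.map_smul]
  rw [← hDp, hDΔ, hΔp, add_mul]
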